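/- Let p₁, p₂, p₃ ∈ EuclideanSpace ℝ (Fin 2) be three points that are not collinear (i.e., the family p : Fin 3 → ℝ² is affinely independent). Then for every subset S of Fin 3 there exist w ∈ EuclideanSpace ℝ (Fin 2) and b ∈ ℝ such that for all i, ⟪w, p i⟫ + b ≥ 0 if and only if i ∈ S. -/

import Mathlib

open scoped RealInnerProductSpace

/-!
Affine independence makes the differences `p i - p i₀` linearly independent, so the Riesz
representation of functionals on their finite-dimensional span yields an affine function
`x ↦ ⟪w, x⟫ + b` with arbitrary prescribed values at the points. Prescribing `1` on `S` and `-1`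
off `S` cuts out `S`.
-/

section Interpolation

variable {𝕜 ι V : Type*} [RCLike 𝕜] [Finite ι] [NormedAddCommGroup V] [InnerProductSpace 𝕜 V]

theorem exists_inner_eq_of_linearIndependent {v : ι → V} (hv : LinearIndependent 𝕜 v)
    (c : ι → 𝕜) : ∃ w : V, ∀ i, inner 𝕜 w (v i) = c i := by
  let U := Submodule.span 𝕜 (Set.range v)
  let basis : Module.Basis ι 𝕜 U := .span hv
  have : FiniteDimensional 𝕜 U := basis.finiteDimensional_of_finite
  have : CompleteSpace U := FiniteDimensional.complete 𝕜 U
  let f : StrongDual 𝕜 U := (basis.constr 𝕜 c).toContinuousLinearMap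
  let w : U := (InnerProductSpace.toDual 𝕜 U).symm f
  refine ⟨w, fun i => ?_⟩
  calc inner 𝕜 (w : V) (v i) = inner 𝕜 w (basis i) := by
        rw [Submodule.coe_inner, Module.Basis.span_apply]
    _ = f (basis i) := InnerProductSpace.toDual_symm_apply
    _ = c i := basis.constr_basis 𝕜 c i

theorem exists_inner_add_eq_of_affineIndependent {p : ι → V} (hp : AffineIndependent 𝕜 p)
    (c : ι → 𝕜) : ∃ (w : V) (b : 𝕜), ∀ i, inner 𝕜 w (p i) + b = c i := by
  rcases isEmpty_or_nonempty ι with _ | ⟨⟨i₀⟩⟩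
  · exact ⟨0, 0, isEmptyElim⟩
  obtain ⟨w, hw⟩ := exists_inner_eq_of_linearIndependent
    ((affineIndependent_iff_linearIndependent_vsub 𝕜 p i₀).1 hp) fun i => c i - c i₀
  have inner_sub (i : ι) : inner 𝕜 w (p i) - inner 𝕜 w (p i₀) = c i - c i₀ := by
    rcases eq_or_ne i i₀ with rfl | hi
    · rw [sub_self, sub_self]
    · rw [← inner_sub_right]
      exact hw ⟨i, hi⟩
  exact ⟨w, c i₀ - inner 𝕜 w (p i₀), fun i => by linear_combination inner_sub i⟩

end Interpolation

theorem three_noncollinear_points_shattered_by_halfplanes_general {ι V : Type*} [Finite ι]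
    [NormedAddCommGroup V] [InnerProductSpace ℝ V] (p : ι → V) (hp : AffineIndependent ℝ p) :
    ∀ S : Set ι, ∃ (w : V) (b : ℝ), ∀ i, 0 ≤ ⟪w, p i⟫ + b ↔ i ∈ S := by
  classical
  intro S
  obtain ⟨w, b, hwb⟩ :=
    exists_inner_add_eq_of_affineIndependent hp fun i => if i ∈ S then 1 else -1
  refine ⟨w, b, fun i => ?_⟩
  rw [hwb i]
  by_cases hi : i ∈ S <;> simp [hi]

/-- Any 3 non-collinear (affinely independent) points in the plane are shattered by
halfplanes `{x | ⟪w, x⟫ + b ≥ 0}`. -/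
theorem three_noncollinear_points_shattered_by_halfplanes
    (p : Fin 3 → EuclideanSpace ℝ (Fin 2)) (hp : AffineIndependent ℝ p) :
    ∀ S : Set (Fin 3), ∃ (w : EuclideanSpace ℝ (Fin 2)) (b : ℝ),
      ∀ i, 0 ≤ ⟪w, p i⟫ + b ↔ i ∈ S :=
  three_noncollinear_points_shattered_by_halfplanes_general p hp
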